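/- Let S be a semitopological semigroup and let (S,(K,weak*)) be a nonexpansive dynamical system, where K is a weak* compact convex subset of the dual space X* of an M-embedded Banach space X. Suppose WAP(S) has a left invariant mean and the enveloping semigroup E(S,K) consists of weak* continuous functions. Then there is x ∈ K with sx = x for all s ∈ S, and the fixed point set F(S) = {x ∈ K : sx = x for all s ∈ S} is a nonexpansive retract of K, i.e., there is a map r: K → K with r(K) ⊆ F(S), r ∘ r = r, r fixing F(S) pointwise, and ‖r(x) − r(y)‖ ≤ ‖x − y‖ for all x, y ∈ K. -/

import Mathlib

open Set MeasureTheory BoundedContinuousFunction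

noncomputable section

universe u v

/-- The weak topology on a topological module `X` over `𝕜`: the coarsest topology making all
continuous linear functionals continuous. -/
def weakTop (𝕜 : Type*) (X : Type*) [NontriviallyNormedField 𝕜] [AddCommGroup X]
    [Module 𝕜 X] [TopologicalSpace X] : TopologicalSpace X :=
  ⨅ f : X →L[𝕜] 𝕜, TopologicalSpace.induced (⇑f) inferInstance

/-- A semitopological semigroup: multiplication is separately continuous. -/
def IsSemitopologicalSemigroup (S : Type*) [Semigroup S] [TopologicalSpace S] : Prop :=
  (∀ t : S, Continuous fun s => t * s) ∧ (∀ t : S, Continuous fun s => s * t)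

section CbDefs

variable (S : Type u) [Semigroup S] [TopologicalSpace S]

/-- `g` is the family of left translates of `f`: `g s = L_s f` where `L_s f (t) = f (s * t)`. -/
def IsLTranslates (f : S →ᵇ ℂ) (g : S → S →ᵇ ℂ) : Prop :=
  ∀ s t, g s t = f (s * t)

/-- `LUC(S)`: bounded continuous `f` such that `s ↦ L_s f` is norm continuous. -/
def LUCset : Set (S →ᵇ ℂ) :=
  {f | ∃ g, IsLTranslates S f g ∧ Continuous g}

/-- `AP(S)`: bounded continuous `f` whose set of left translates is relatively compact in the
norm topology of `C(S)`. -/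
def APset : Set (S →ᵇ ℂ) :=
  {f | ∃ g, IsLTranslates S f g ∧ IsCompact (closure (Set.range g))}

/-- `WAP(S)`: bounded continuous `f` whose set of left translates is relatively compact in the
weak topology of `C(S)`. -/
def WAPset : Set (S →ᵇ ℂ) :=
  {f | ∃ g, IsLTranslates S f g ∧
    @IsCompact _ (weakTop ℂ (S →ᵇ ℂ)) (@closure _ (weakTop ℂ (S →ᵇ ℂ)) (Set.range g))}

/-- The topology on `C(S)` induced by the multiplicative means. -/
def lmcTop : TopologicalSpace (S →ᵇ ℂ) :=
  ⨅ μ : {μ : (S →ᵇ ℂ) →L[ℂ] ℂ // ‖μ‖ = 1 ∧ μ 1 = 1 ∧ ∀ f g, μ (f * g) = μ f * μ g},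
    TopologicalSpace.induced (⇑μ.1) inferInstance

/-- `LMC(S)`: bounded continuous `f` such that `s ↦ L_s f` is continuous into `C(S)` with the
topology induced by the multiplicative means. -/
def LMCset : Set (S →ᵇ ℂ) :=
  {f | ∃ g, IsLTranslates S f g ∧ @Continuous _ _ _ (lmcTop S) g}

/-- `Y ⊆ C(S)` has a left invariant mean: there is a norm-one functional `μ` on `C(S)` with
`μ 1 = 1` and `μ (L_s f) = μ f` for all `f ∈ Y` and `s ∈ S`.  (By the Hahn–Banach extension
theorem this is equivalent to the existence of a left invariant mean on the subspace `Y`.) -/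
def HasLIM (Y : Set (S →ᵇ ℂ)) : Prop :=
  ∃ μ : (S →ᵇ ℂ) →L[ℂ] ℂ, ‖μ‖ = 1 ∧ μ 1 = 1 ∧
    ∀ f ∈ Y, ∀ g : S → S →ᵇ ℂ, IsLTranslates S f g → ∀ s, μ (g s) = μ f

end CbDefs

/-- The weak-star topology on the dual of a normed space: the topology of pointwise
convergence. -/
def wstarTop (X : Type*) [SeminormedAddCommGroup X] [NormedSpace ℝ X] :
    TopologicalSpace (StrongDual ℝ X) :=
  TopologicalSpace.induced (fun (f : StrongDual ℝ X) (x : X) => f x) Pi.topologicalSpace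

set_option maxSynthPendingDepth 3 in
/-- A Banach space `X` is `M`-embedded if `X` is an `M`-ideal in its bidual, i.e.
`X*** = X* ⊕₁ X^⊥`. -/
def MEmbeddedSpace (X : Type v) [NormedAddCommGroup X] [NormedSpace ℝ X] : Prop :=
  -- every `F ∈ X***` decomposes as `F = g + H` with `g` in the canonical image of `X*`
  -- and `H ∈ X^⊥`
  (∀ F : StrongDual ℝ (StrongDual ℝ (StrongDual ℝ X)),
    ∃ (g : StrongDual ℝ X)
      (H : StrongDual ℝ (StrongDual ℝ (StrongDual ℝ X))),
      (∀ x : X, H (NormedSpace.inclusionInDoubleDual ℝ X x) = 0) ∧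
      F = NormedSpace.inclusionInDoubleDual ℝ (StrongDual ℝ X) g + H) ∧
  -- and the decomposition is an `ℓ¹`-decomposition
  (∀ (g : StrongDual ℝ X)
      (H : StrongDual ℝ (StrongDual ℝ (StrongDual ℝ X))),
    (∀ x : X, H (NormedSpace.inclusionInDoubleDual ℝ X x) = 0) →
    ‖NormedSpace.inclusionInDoubleDual ℝ (StrongDual ℝ X) g + H‖ =
      ‖NormedSpace.inclusionInDoubleDual ℝ (StrongDual ℝ X) g‖ + ‖H‖)

/-!
The enveloping semigroup `E = E(S,K)` consists of weak* continuous maps, so it is a compact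
semigroup with separately continuous multiplication; composing continuous functions on `E` with
`S → E` gives weakly almost periodic functions on `S`, and the mean on `WAP(S)` becomes a left
invariant functional on `C(E)`. Hence any two closed right ideals of `E` meet, so there is a
smallest one `R`; for an idempotent `e ∈ R`, `G = R e` is a compact group with `p G = G` for all
`p ∈ E`.

On a minimal weak* closed convex invariant set `B`, the supremum `r` of the distances to an orbit
`G x₀ ⊆ B` is the same from every point of `B`. If `r > 0`, the orbit contains a sequence with
mutual distances `> r / 2`; let `H` be the closed subgroup generated by it. The `M`-ideal property
turns weak* limits with constant radius into weak limits, so `H x₀` is norm separable, and Baire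
category together with nonexpansiveness makes it totally bounded, a contradiction. So `r = 0`, and
the orbit is a common fixed point. Bruck's minimality argument then gives the retraction.
-/

section TotalVariation

open CompactlySupported Filter Topology
open scoped NNReal Pointwise

variable {𝕜 : Type*} [RCLike 𝕜] {Q : Type*} [TopologicalSpace Q]

theorem exists_add_eq_of_norm_le_add {E : Type*} [NormedAddCommGroup E] [NormedSpace ℝ E]
    (g : C(Q, E)) {f₁ f₂ : Q → ℝ≥0} (hf₁ : Continuous f₁) (hf₂ : Continuous f₂)
    (hg : ∀ q, ‖g q‖ ≤ f₁ q + f₂ q) :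
    ∃ g₁ g₂ : C(Q, E), g₁ + g₂ = g ∧ (∀ q, ‖g₁ q‖ ≤ f₁ q) ∧ ∀ q, ‖g₂ q‖ ≤ f₂ q := by
  let part (f : Q → ℝ≥0) (q : Q) : E := (f q / (f₁ q + f₂ q) : ℝ) • g q
  have norm_part_le (f : Q → ℝ≥0) (q : Q) : ‖part f q‖ ≤ f q := by
    calc ‖part f q‖ = f q / (f₁ q + f₂ q) * ‖g q‖ := by
          rw [norm_smul, Real.norm_of_nonneg (by positivity)]
      _ ≤ f q / (f₁ q + f₂ q) * (f₁ q + f₂ q) := by gcongr; exact hg q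
      _ ≤ f q := by rw [div_mul_comm]; exact mul_le_of_le_one_left (f q).2 (div_self_le_one _)
  have part_add (q : Q) : part f₁ q + part f₂ q = g q := by
    rw [← add_smul, ← add_div]
    rcases eq_or_ne (f₁ q + f₂ q : ℝ) 0 with h | h
    · have : g q = 0 := norm_le_zero_iff.1 ((hg q).trans h.le)
      rw [this, smul_zero]
    · rw [div_self h, one_smul]
  have continuous_part {f : Q → ℝ≥0} (hf : Continuous f)
      (hzero : ∀ q, (f₁ q + f₂ q : ℝ) = 0 → f q = 0) : Continuous (part f) := by
    refine continuous_iff_continuousAt.2 fun q => ?_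
    rcases eq_or_ne (f₁ q + f₂ q : ℝ) 0 with h | h
    · have hq : part f q = 0 := norm_le_zero_iff.1 ((norm_part_le f q).trans (by simp [hzero q h]))
      rw [ContinuousAt, hq]
      have hf₀ : Tendsto (fun x => (f x : ℝ)) (𝓝 q) (𝓝 0) := by
        simpa only [hzero q h, NNReal.coe_zero] using
          (show Continuous fun x => (f x : ℝ) by fun_prop).tendsto q
      exact squeeze_zero_norm (norm_part_le f) hf₀
    · exact ContinuousAt.smul (by fun_prop (disch := exact h)) g.continuous.continuousAt
  refine ⟨⟨part f₁, continuous_part hf₁ fun q h => ?_⟩,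
    ⟨part f₂, continuous_part hf₂ fun q h => ?_⟩,
    ContinuousMap.ext part_add, norm_part_le f₁, norm_part_le f₂⟩ <;>
  · have := (f₁ q).2; have := (f₂ q).2
    exact NNReal.eq (by push_cast; linarith)

/-- The real parts of the values of `ν` on the functions dominated by `f`. Their supremum is the
total variation of `ν` at `f`; taking real parts makes the set additive in `f`. -/
def variationSet (ν : C(Q, 𝕜) →L[𝕜] 𝕜) (f : Q → ℝ≥0) : Set ℝ :=
  {t | ∃ g : C(Q, 𝕜), (∀ q, ‖g q‖ ≤ f q) ∧ RCLike.re (ν g) = t}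

variable (ν : C(Q, 𝕜) →L[𝕜] 𝕜)

theorem zero_mem_variationSet (f : Q → ℝ≥0) : 0 ∈ variationSet ν f :=
  ⟨0, fun _ => by simp, by simp⟩

theorem variationSet_add {f₁ f₂ : Q → ℝ≥0} (hf₁ : Continuous f₁) (hf₂ : Continuous f₂) :
    variationSet ν (f₁ + f₂) = variationSet ν f₁ + variationSet ν f₂ := by
  refine Subset.antisymm ?_ ?_
  · rintro _ ⟨g, hg, rfl⟩
    obtain ⟨g₁, g₂, rfl, hg₁, hg₂⟩ := exists_add_eq_of_norm_le_add g hf₁ hf₂ (by simpa using hg)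
    exact ⟨_, ⟨g₁, hg₁, rfl⟩, _, ⟨g₂, hg₂, rfl⟩, by simp⟩
  · rintro _ ⟨_, ⟨g₁, hg₁, rfl⟩, _, ⟨g₂, hg₂, rfl⟩, rfl⟩
    exact ⟨g₁ + g₂, fun q => (norm_add_le _ _).trans (by simpa using add_le_add (hg₁ q) (hg₂ q)),
      by simp⟩

theorem smul_variationSet_subset (c : ℝ≥0) (f : Q → ℝ≥0) :
    c • variationSet ν f ⊆ variationSet ν (c • f) := by
  rintro _ ⟨_, ⟨g, hg, rfl⟩, rfl⟩
  refine ⟨((c : ℝ) : 𝕜) • g, fun q => ?_, ?_⟩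
  · simpa [norm_smul] using mul_le_mul_of_nonneg_left (hg q) c.coe_nonneg
  · simp [RCLike.smul_re]

theorem variationSet_smul (c : ℝ≥0) (f : Q → ℝ≥0) :
    variationSet ν (c • f) = c • variationSet ν f := by
  refine Subset.antisymm ?_ (smul_variationSet_subset ν c f)
  rcases eq_or_ne c 0 with rfl | hc
  · rintro _ ⟨g, hg, rfl⟩
    have : g = 0 := ContinuousMap.ext fun q => norm_le_zero_iff.1 (by simpa using hg q)
    exact ⟨0, zero_mem_variationSet ν f, by simp [this]⟩
  · rw [Set.subset_smul_set_iff₀ hc]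
    simpa [inv_smul_smul₀ hc] using smul_variationSet_subset ν c⁻¹ (c • f)

variable [CompactSpace Q]

theorem bddAbove_variationSet {f : Q → ℝ≥0} (hf : Continuous f) :
    BddAbove (variationSet ν f) := by
  obtain ⟨M, hM⟩ := (isCompact_range hf).bddAbove
  refine ⟨‖ν‖ * M, ?_⟩
  rintro _ ⟨g, hg, rfl⟩
  have hgM : ‖g‖ ≤ M := (ContinuousMap.norm_le _ M.2).2 fun q =>
    (hg q).trans (by exact_mod_cast hM ⟨q, rfl⟩)
  exact (RCLike.re_le_norm _).trans (ν.le_opNorm_of_le hgM)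

/-- The total variation of a continuous functional on `C(Q)`, as a positive functional on the
nonnegative functions. -/
def totalVariation : C_c(Q, ℝ≥0) →ₗ[ℝ≥0] ℝ≥0 where
  toFun f := ⟨sSup (variationSet ν f),
    le_csSup (bddAbove_variationSet ν f.continuous) (zero_mem_variationSet ν f)⟩
  map_add' f₁ f₂ := NNReal.eq <| by
    have h₁ : Continuous f₁ := f₁.continuous
    have h₂ : Continuous f₂ := f₂.continuous
    calc sSup (variationSet ν (f₁ + f₂)) = sSup (variationSet ν f₁ + variationSet ν f₂) := by
          rw [variationSet_add ν h₁ h₂]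
      _ = sSup (variationSet ν f₁) + sSup (variationSet ν f₂) :=
          csSup_add ⟨0, zero_mem_variationSet ν f₁⟩ (bddAbove_variationSet ν h₁)
            ⟨0, zero_mem_variationSet ν f₂⟩ (bddAbove_variationSet ν h₂)
  map_smul' c f := NNReal.eq <| by
    calc sSup (variationSet ν (c • f)) = sSup (c • variationSet ν f) := by
          rw [variationSet_smul]
      _ = c * sSup (variationSet ν f) := Real.sSup_smul_of_nonneg c.2 _

theorem norm_apply_le_totalVariation (g : C(Q, 𝕜)) (f : C_c(Q, ℝ≥0)) (hg : ∀ q, ‖g q‖ ≤ f q) :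
    ‖ν g‖ ≤ totalVariation ν f := by
  obtain ⟨c, hc, hcν⟩ := RCLike.exists_norm_eq_mul_self (ν g)
  refine le_csSup (bddAbove_variationSet ν f.continuous) ⟨c • g, fun q => ?_, ?_⟩
  · simpa [hc] using hg q
  · rw [map_smul, smul_eq_mul, ← hcν, RCLike.ofReal_re]

variable [T2Space Q]

theorem exists_measure_norm_apply_le_integral [MeasurableSpace Q] [BorelSpace Q] :
    ∃ m : Measure Q, IsFiniteMeasure m ∧ ∀ g : C(Q, 𝕜), ‖ν g‖ ≤ ∫ q, ‖g q‖ ∂m := by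
  refine ⟨NNRealRMK.rieszMeasure (totalVariation ν), inferInstance, fun g => ?_⟩
  let f : C_c(Q, ℝ≥0) :=
    CompactlySupportedContinuousMap.continuousMapEquiv ⟨fun q => ‖g q‖₊, by fun_prop⟩
  calc ‖ν g‖ ≤ totalVariation ν f := norm_apply_le_totalVariation ν g f fun _ => le_rfl
    _ = ∫ q, ‖g q‖ ∂_ := (NNRealRMK.integral_rieszMeasure (totalVariation ν) f).symm

theorem tendsto_apply_zero_of_bounded_of_pointwise {f : ℕ → C(Q, 𝕜)} {M : ℝ}
    (hM : ∀ n, ‖f n‖ ≤ M) (hf : ∀ q, Tendsto (fun n => f n q) atTop (𝓝 0)) :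
    Tendsto (fun n => ν (f n)) atTop (𝓝 0) := by
  borelize Q
  obtain ⟨m, _, hm⟩ := exists_measure_norm_apply_le_integral ν
  have hlim : Tendsto (fun n => ∫ q, ‖f n q‖ ∂m) atTop (𝓝 (∫ _ : Q, (0 : ℝ) ∂m)) := by
    refine tendsto_integral_of_dominated_convergence (fun _ => M)
      (fun n => (f n).continuous.norm.aestronglyMeasurable) (integrable_const M)
      (fun n => .of_forall fun q => ?_) (.of_forall fun q => by simpa using (hf q).norm)
    simpa using ((f n).norm_coe_le_norm q).trans (hM n)
  rw [integral_zero] at hlim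
  exact squeeze_zero_norm (fun n => hm (f n)) hlim

end TotalVariation

section PointwiseCompact

open Filter Topology

theorem mem_closure_pi_iff_dist_lt {Q Y : Type*} [PseudoMetricSpace Y] {A : Set (Q → Y)}
    {f₀ : Q → Y} :
    f₀ ∈ closure A ↔ ∀ (I : Set Q) (m : ℕ), I.Finite → ∃ f ∈ A, ∀ q ∈ I,
      dist (f q) (f₀ q) < 1 / (m + 1) := by
  have hbasis : (𝓝 f₀).HasBasis (fun I : Set Q × ℕ => I.1.Finite ∧ True)
      fun I => I.1.pi fun q => Metric.ball (f₀ q) (1 / (I.2 + 1)) := by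
    rw [nhds_pi]
    refine hasBasis_pi_same_index (fun q => Metric.nhds_basis_ball_inv_nat_succ) ?_
    intro I k hI _
    obtain ⟨m, hm⟩ := (hI.image k).bddAbove
    refine ⟨m, trivial, fun q hq => Metric.ball_subset_ball ?_⟩
    exact Nat.one_div_le_one_div (hm (mem_image_of_mem k hq))
  rw [mem_closure_iff_nhds_basis hbasis]
  simp only [Prod.forall, and_true, Set.mem_pi, Metric.mem_ball]

variable {Q Y : Type*} [TopologicalSpace Q] [CompactSpace Q]

theorem exists_countable_subset_mem_closure_of_continuous [PseudoMetricSpace Y]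
    {A : Set (Q → Y)} (hA : ∀ f ∈ A, Continuous f) {f₀ : Q → Y} (hf₀ : Continuous f₀)
    (hmem : f₀ ∈ closure A) : ∃ A₀ ⊆ A, A₀.Countable ∧ f₀ ∈ closure A₀ := by
  rw [mem_closure_pi_iff_dist_lt] at hmem
  let U (n m : ℕ) (f : A) : Set (Fin n → Q) := {t | ∀ i, dist (f.1 (t i)) (f₀ (t i)) < 1 / (m + 1)}
  have isOpen_U (n m : ℕ) (f : A) : IsOpen (U n m f) := by
    have := hA f f.2
    simp only [U, ofPred_forall]
    exact isOpen_iInter_of_finite fun i => isOpen_lt (by fun_prop) continuous_const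
  have iUnion_U (n m : ℕ) : univ ⊆ ⋃ f, U n m f := fun t _ => by
    obtain ⟨f, hfA, hf⟩ := hmem (range t) m (finite_range t)
    exact mem_iUnion.2 ⟨⟨f, hfA⟩, fun i => hf _ ⟨i, rfl⟩⟩
  choose T hT using fun n m => isCompact_univ.elim_finite_subcover _ (isOpen_U n m) (iUnion_U n m)
  refine ⟨⋃ (n) (m), (↑) '' (T n m : Set A), ?_, ?_, mem_closure_pi_iff_dist_lt.2 fun I m hI => ?_⟩
  · simp only [iUnion_subset_iff, image_subset_iff]
    exact fun n m f _ => f.2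
  · exact countable_iUnion fun n => countable_iUnion fun m => (T n m).countable_toSet.image _
  · obtain ⟨n, t, -, rfl⟩ := hI.fin_param
    obtain ⟨f, hfT, hf⟩ := mem_iUnion₂.1 (hT n m (mem_univ t))
    exact ⟨f, mem_iUnion₂.2 ⟨n, m, f, hfT, rfl⟩, forall_mem_range.2 hf⟩

theorem exists_countable_forall_eqOn_imp_eq [MetricSpace Y] {A : Set (Q → Y)}
    (hAc : A.Countable) (hA : ∀ f ∈ A, Continuous f) :
    ∃ D : Set Q, D.Countable ∧ ∀ f ∈ closure A, ∀ g ∈ closure A, Continuous f → Continuous g →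
      EqOn f g D → f = g := by
  have : Countable A := hAc
  let Φ (q : Q) (f : A) : Y := f.1 q
  have hΦ : Continuous Φ := continuous_pi fun f => hA f f.2
  obtain ⟨R, hRsub, hRc, hR⟩ :=
    (isCompact_range hΦ).isSeparable.exists_countable_dense_subset
  obtain ⟨D, hDR, hDinj⟩ := exists_image_eq_and_injOn (Φ ⁻¹' R) Φ
  rw [image_preimage_eq_of_subset hRsub] at hDR
  refine ⟨D, countable_of_injective_of_countable_image hDinj (hDR ▸ hRc), ?_⟩
  intro f hf g hg hfc hgc hfg
  ext q
  obtain ⟨q', hq', hqq'⟩ : Φ q ∈ Φ '' closure D := by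
    rw [image_closure_of_isCompact isClosed_closure.isCompact hΦ.continuousOn, hDR]
    exact hR ⟨q, rfl⟩
  have apply_eq {h : Q → Y} (hh : h ∈ closure A) : h q' = h q := by
    have hclosed : IsClosed {h : Q → Y | h q' = h q} :=
      isClosed_eq (continuous_apply q') (continuous_apply q)
    exact closure_minimal (fun h hhA => congrFun hqq' ⟨h, hhA⟩) hclosed hh
  rw [← apply_eq hf, ← apply_eq hg]
  exact hfg.closure hfc hgc hq'

theorem exists_seq_tendsto_of_mem_closure_of_continuous [MetricSpace Y] {A : Set (Q → Y)}
    (hAc : IsCompact (closure A)) (hA : ∀ f ∈ closure A, Continuous f) {f₀ : Q → Y}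
    (hf₀ : f₀ ∈ closure A) :
    ∃ f : ℕ → Q → Y, (∀ n, f n ∈ A) ∧ Tendsto f atTop (𝓝 f₀) := by
  obtain ⟨A₀, hA₀A, hA₀c, hf₀A₀⟩ := exists_countable_subset_mem_closure_of_continuous
    (fun f hf => hA f (subset_closure hf)) (hA f₀ hf₀) hf₀
  have hsub : closure A₀ ⊆ closure A := closure_mono hA₀A
  obtain ⟨D, hDc, hD⟩ := exists_countable_forall_eqOn_imp_eq hA₀c
    fun f hf => hA f (subset_closure (hA₀A hf))
  have : Countable D := hDc
  have hres : Continuous (D.domRestrict : (Q → Y) → D → Y) :=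
    continuous_pi fun q => continuous_apply q.1
  obtain ⟨g, hg, hglim⟩ := mem_closure_iff_seq_limit.1
    (image_closure_subset_closure_image hres (mem_image_of_mem _ hf₀A₀))
  choose f hfA₀ hfg using hg
  refine ⟨f, fun n => hA₀A (hfA₀ n), tendsto_iff_ultrafilter _ _ _ |>.2 fun 𝓤 h𝓤 => ?_⟩
  obtain ⟨h, hh, hlim⟩ := (hAc.of_isClosed_subset isClosed_closure hsub).ultrafilter_le_nhds
    (𝓤.map f) (le_principal_iff.2 (mem_map.2 (univ_mem' fun n => subset_closure (hfA₀ n))))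
  suffices h = f₀ from this ▸ hlim
  refine hD h hh f₀ hf₀A₀ (hA h (hsub hh)) (hA f₀ hf₀) ?_
  have hlimD : Tendsto (fun n => D.domRestrict (f n)) 𝓤 (𝓝 (D.domRestrict h)) :=
    (hres.tendsto h).comp hlim
  rw [← domRestrict_eq_domRestrict_iff]
  refine tendsto_nhds_unique hlimD ?_
  simpa only [hfg] using hglim.mono_left h𝓤

theorem continuous_apply_of_continuous_eval {𝕜 P : Type*} [RCLike 𝕜] [T2Space Q]
    [TopologicalSpace P] [CompactSpace P] {ψ : P → C(Q, 𝕜)} (hψ : ∀ q, Continuous fun p => ψ p q)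
    {M : ℝ} (hM : ∀ p, ‖ψ p‖ ≤ M) (ν : C(Q, 𝕜) →L[𝕜] 𝕜) : Continuous fun p => ν (ψ p) := by
  let F (p : P) : Q → 𝕜 := ψ p
  have hF : Continuous F := continuous_pi hψ
  refine continuous_iff_continuousAt.2 fun p₀ => Metric.tendsto_nhds.2 fun ε hε => ?_
  by_contra hnot
  let A : Set P := {p | ¬ dist (ν (ψ p)) (ν (ψ p₀)) < ε}
  have hp₀ : p₀ ∈ closure A := mem_closure_iff_frequently.2 (not_eventually.1 hnot)
  have hsub : closure (F '' A) ⊆ range F :=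
    closure_minimal (image_subset_range F A) (isCompact_range hF).isClosed
  obtain ⟨f, hfA, hf⟩ := exists_seq_tendsto_of_mem_closure_of_continuous
    ((isCompact_range hF).of_isClosed_subset isClosed_closure hsub)
    (fun g hg => by obtain ⟨p, rfl⟩ := hsub hg; exact (ψ p).continuous)
    (image_closure_subset_closure_image hF (mem_image_of_mem F hp₀))
  choose p hpA hpf using hfA
  have hlim : Tendsto (fun n => ν (ψ (p n) - ψ p₀)) atTop (𝓝 0) := by
    refine tendsto_apply_zero_of_bounded_of_pointwise ν (M := M + M)
      (fun n => (norm_sub_le _ _).trans (add_le_add (hM _) (hM _))) fun q => ?_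
    have hq : Tendsto (fun n => F (p n) q) atTop (𝓝 (F p₀ q)) := by
      simpa only [hpf] using tendsto_pi_nhds.1 hf q
    simpa [F] using hq.sub_const (F p₀ q)
  obtain ⟨n, hn⟩ := (Metric.tendsto_nhds.1 hlim ε hε).exists
  exact hpA n (by simpa [dist_eq_norm] using hn)

end PointwiseCompact

section Kernel

variable {E : Type*} [Semigroup E] [TopologicalSpace E]

/-- A closed right ideal of a semigroup with a topology, nonempty by convention so that a smallest
one can exist. -/
structure IsClosedRightIdeal (R : Set E) : Prop where
  isClosed : IsClosed R
  nonempty : R.Nonempty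
  mul_mem {r : E} (hr : r ∈ R) (q : E) : r * q ∈ R

lemma IsClosedRightIdeal.inter_nonempty_of_leftInvariant [SeparatelyContinuousMul E] [NormalSpace E]
    {𝕜 Y : Type*} [RCLike 𝕜] {m : C(E, 𝕜) → Y} (hm : m 0 ≠ m 1)
    (hinv : ∀ (p : E) (ψ : C(E, 𝕜)), m (ψ.comp ⟨(p * ·), continuous_const_mul p⟩) = m ψ)
    {R₁ R₂ : Set E} (h₁ : IsClosedRightIdeal R₁) (h₂ : IsClosedRightIdeal R₂) :
    (R₁ ∩ R₂).Nonempty := by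
  by_contra hempty
  obtain ⟨f, hf₁, hf₂, -⟩ := exists_continuous_zero_one_of_isClosed h₁.isClosed h₂.isClosed
    (disjoint_iff_inter_eq_empty.2 (not_nonempty_iff_eq_empty.1 hempty))
  let ψ : C(E, 𝕜) := ⟨fun q => (f q : 𝕜), by fun_prop⟩
  obtain ⟨r₁, hr₁⟩ := h₁.nonempty
  obtain ⟨r₂, hr₂⟩ := h₂.nonempty
  have translate_zero : ψ.comp ⟨(r₁ * ·), continuous_const_mul r₁⟩ = 0 := by
    ext q
    simp [ψ, hf₁ (h₁.mul_mem hr₁ q)]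
  have translate_one : ψ.comp ⟨(r₂ * ·), continuous_const_mul r₂⟩ = 1 := by
    ext q
    simp [ψ, hf₂ (h₂.mul_mem hr₂ q)]
  exact hm (translate_zero ▸ translate_one ▸ (hinv r₁ ψ).trans (hinv r₂ ψ).symm)

lemma exists_isLeast_isClosedRightIdeal [CompactSpace E] [Nonempty E]
    (hinter : ∀ R₁ R₂ : Set E, IsClosedRightIdeal R₁ → IsClosedRightIdeal R₂ →
      (R₁ ∩ R₂).Nonempty) :
    ∃ R : Set E, IsLeast {R | IsClosedRightIdeal R} R := by
  refine ⟨⋂₀ {R | IsClosedRightIdeal R}, ⟨isClosed_sInter fun R hR => hR.isClosed, ?_,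
    fun hr q R hR => hR.mul_mem (hr R hR) q⟩, fun R hR => sInter_subset_of_mem hR⟩
  have : Nonempty {R : Set E | IsClosedRightIdeal R} :=
    ⟨univ, isClosed_univ, univ_nonempty, fun _ _ => mem_univ _⟩
  refine IsCompact.nonempty_sInter_of_directed_nonempty_isCompact_isClosed (fun A hA B hB => ?_)
    (fun R hR => hR.nonempty) (fun R hR => hR.isClosed.isCompact) fun R hR => hR.isClosed
  exact ⟨A ∩ B, ⟨hA.isClosed.inter hB.isClosed, hinter A B hA hB,
    fun hr q => ⟨hA.mul_mem hr.1 q, hB.mul_mem hr.2 q⟩⟩, inter_subset_left, inter_subset_right⟩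

variable [CompactSpace E] [T2Space E] [SeparatelyContinuousMul E] {R : Set E}

lemma image_mul_left_eq_of_isLeast (hR : IsLeast {R | IsClosedRightIdeal R} R) (p : E) :
    (p * ·) '' R = R := by
  have subset_image (p : E) : R ⊆ (p * ·) '' R := by
    refine hR.2 ⟨(continuous_const_mul p).isClosedMap _ hR.1.isClosed, hR.1.nonempty.image _, ?_⟩
    rintro _ ⟨r, hr, rfl⟩ q
    exact ⟨r * q, hR.1.mul_mem hr q, (mul_assoc _ _ _).symm⟩
  refine (image_subset_iff.2 ?_).antisymm (subset_image p)
  suffices R ⊆ R ∩ (p * ·) ⁻¹' R from this.trans inter_subset_right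
  refine hR.2 ⟨hR.1.isClosed.inter (hR.1.isClosed.preimage (continuous_const_mul p)), ?_, ?_⟩
  · obtain ⟨r, hr⟩ := hR.1.nonempty
    obtain ⟨r', hr', rfl⟩ := subset_image p hr
    exact ⟨r', hr', hr⟩
  · rintro r ⟨hr, hpr⟩ q
    exact ⟨hR.1.mul_mem hr q, show p * (r * q) ∈ R from mul_assoc p r q ▸ hR.1.mul_mem hpr q⟩

theorem exists_compact_group_mulHom_of_isLeast {E : Type u} [Semigroup E] [TopologicalSpace E]
    [CompactSpace E] [T2Space E] [SeparatelyContinuousMul E] {R : Set E}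
    (hR : IsLeast {R | IsClosedRightIdeal R} R) :
    ∃ (G : Type u) (_ : Group G) (_ : TopologicalSpace G) (_ : CompactSpace G) (_ : T2Space G)
      (_ : SeparatelyContinuousMul G) (ι : G →ₙ* E),
      Continuous ι ∧ ∀ p, (p * ·) '' range ι = range ι := by
  have himage := image_mul_left_eq_of_isLeast hR
  obtain ⟨e, he, hee⟩ := exists_idempotent_in_compact_subsemigroup continuous_mul_const R
    hR.1.nonempty hR.1.isClosed.isCompact fun x hx y _ => hR.1.mul_mem hx y
  let G : Subsemigroup E :=
    { carrier := {g | g ∈ R ∧ g * e = g}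
      mul_mem' := fun ha hb => ⟨hR.1.mul_mem ha.1 _, by rw [mul_assoc, hb.2]⟩ }
  have hG : IsClosed (G : Set E) :=
    hR.1.isClosed.inter (isClosed_eq (continuous_mul_const e) continuous_id)
  have mul_left_surjOn (p : E) {g : E} (hg : g ∈ G) : ∃ h ∈ G, p * h = g := by
    obtain ⟨r, hr, hpr : p * r = g⟩ := (himage p).superset hg.1
    exact ⟨r * e, ⟨hR.1.mul_mem hr e, by rw [mul_assoc, hee]⟩, by rw [← mul_assoc, hpr, hg.2]⟩
  choose inv hinvG hinv using fun g : G => mul_left_surjOn g (show e ∈ G from ⟨he, hee⟩)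
  have hGcompact : CompactSpace G := isCompact_iff_compactSpace.1 hG.isCompact
  let : One G := ⟨⟨e, he, hee⟩⟩
  let : Inv G := ⟨fun g => ⟨inv g, hinvG g⟩⟩
  refine ⟨G, Group.ofRightAxioms mul_assoc (fun g => Subtype.ext g.2.2)
    (fun g => Subtype.ext (hinv g)), inferInstance, hGcompact, inferInstance,
    inferInstanceAs (SeparatelyContinuousMul G), MulMemClass.subtype G, continuous_subtype_val,
    fun p => ?_⟩
  suffices (p * ·) '' (G : Set E) = G by simpa using this
  refine Subset.antisymm (image_subset_iff.2 fun g hg => ?_) fun g hg => mul_left_surjOn p hg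
  exact ⟨himage p ▸ mem_image_of_mem _ hg.1, (mul_assoc p g e).trans (congrArg (p * ·) hg.2)⟩

end Kernel

section WeaklyAlmostPeriodic

lemma continuous_weakTop_iff {𝕜 X P : Type*} [NontriviallyNormedField 𝕜] [AddCommGroup X]
    [Module 𝕜 X] [TopologicalSpace X] [TopologicalSpace P] {f : P → X} :
    @Continuous P X _ (weakTop 𝕜 X) f ↔ ∀ ν : X →L[𝕜] 𝕜, Continuous fun p => ν (f p) :=
  continuous_iInf_rng.trans (forall_congr' fun _ => continuous_induced_rng)

lemma t2Space_weakTop (𝕜 X : Type*) [NontriviallyNormedField 𝕜] [AddCommGroup X]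
    [Module 𝕜 X] [TopologicalSpace X] [SeparatingDual 𝕜 X] : @T2Space X (weakTop 𝕜 X) := by
  refine @T2Space.of_injective_continuous _ ((X →L[𝕜] 𝕜) → 𝕜) (weakTop 𝕜 X) _ _ (fun x ν => ν x)
    (fun x y hxy => (SeparatingDual.eq_iff_forall_dual_eq (R := 𝕜)).2 (congrFun hxy)) ?_
  exact @continuous_pi _ _ _ (weakTop 𝕜 X) _ _ fun ν =>
    continuous_iInf_dom (i := ν) continuous_induced_dom

variable {E S : Type*} [TopologicalSpace E] [CompactSpace E] [TopologicalSpace S]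

/-- Composition with a continuous map `θ : S → E`, as an operator `C(E) → C(S)`. For the canonical
map of `S` into a compactification this identifies `C(E)` with a subspace of `C(S)`. -/
def pullback (θ : C(S, E)) : C(E, ℂ) →L[ℂ] (S →ᵇ ℂ) :=
  compContinuousCLM ℂ ℂ θ ∘L (ContinuousMap.linearIsometryBoundedOfCompact E ℂ ℂ : _ →L[ℂ] _)

@[simp]
lemma pullback_apply (θ : C(S, E)) (ψ : C(E, ℂ)) (s : S) : pullback θ ψ s = ψ (θ s) := rfl

variable [Semigroup E] [SeparatelyContinuousMul E] [Semigroup S]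

lemma isLTranslates_pullback {θ : C(S, E)} (hmul : ∀ s t, θ (s * t) = θ s * θ t) (ψ : C(E, ℂ)) :
    IsLTranslates S (pullback θ ψ)
      fun s => pullback θ (ψ.comp ⟨(θ s * ·), continuous_const_mul (θ s)⟩) :=
  fun s t => by simp [hmul]

variable [T2Space E]

lemma continuous_apply_comp_mul_left (ψ : C(E, ℂ)) (ν : C(E, ℂ) →L[ℂ] ℂ) :
    Continuous fun p => ν (ψ.comp ⟨(p * ·), continuous_const_mul p⟩) :=
  continuous_apply_of_continuous_eval (M := ‖ψ‖)
    (ψ := fun p => ψ.comp ⟨(p * ·), continuous_const_mul p⟩)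
    (fun q => ψ.continuous.comp (continuous_mul_const q))
    (fun p => (ContinuousMap.norm_le _ (norm_nonneg _)).2 fun q => ψ.norm_coe_le_norm (p * q)) ν

theorem pullback_mem_WAPset {θ : C(S, E)} (hmul : ∀ s t, θ (s * t) = θ s * θ t) (ψ : C(E, ℂ)) :
    pullback θ ψ ∈ WAPset S := by
  have translates_compact : @IsCompact _ (weakTop ℂ (S →ᵇ ℂ))
      (range fun p => pullback θ (ψ.comp ⟨(p * ·), continuous_const_mul p⟩)) :=
    @isCompact_range _ _ _ (weakTop ℂ (S →ᵇ ℂ)) _ _ (continuous_weakTop_iff.2 fun ν =>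
      continuous_apply_comp_mul_left ψ (ν.comp (pullback θ)))
  have := t2Space_weakTop ℂ (S →ᵇ ℂ)
  refine ⟨_, isLTranslates_pullback hmul ψ, @IsCompact.closure_of_subset _ (weakTop ℂ (S →ᵇ ℂ))
    (@T2Space.r1Space _ (weakTop ℂ (S →ᵇ ℂ)) this) _ _ translates_compact ?_⟩
  rintro _ ⟨s, rfl⟩
  exact ⟨θ s, rfl⟩

theorem exists_leftInvariant_of_hasLIM_WAPset {θ : C(S, E)} (hmul : ∀ s t, θ (s * t) = θ s * θ t)
    (hθ : DenseRange θ) (hLIM : HasLIM S (WAPset S)) :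
    ∃ m : C(E, ℂ) →L[ℂ] ℂ, m 1 = 1 ∧
      ∀ (p : E) (ψ : C(E, ℂ)), m (ψ.comp ⟨(p * ·), continuous_const_mul p⟩) = m ψ := by
  obtain ⟨μ, -, hμ₁, hμ⟩ := hLIM
  refine ⟨μ.comp (pullback θ), hμ₁, fun p ψ => ?_⟩
  exact congrFun (hθ.equalizer (continuous_apply_comp_mul_left ψ (μ.comp (pullback θ)))
    continuous_const (funext fun s =>
      hμ _ (pullback_mem_WAPset hmul ψ) _ (isLTranslates_pullback hmul ψ) s)) p

end WeaklyAlmostPeriodic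

section DualSpace

open Filter Topology

lemma isClosed_setOf_norm_le_of_continuous_eval {V Z : Type*} [SeminormedAddCommGroup V]
    [NormedSpace ℝ V] [TopologicalSpace Z] {f : Z → StrongDual ℝ V}
    (hf : ∀ v, Continuous fun z => f z v) (t : ℝ) : IsClosed {z | ‖f z‖ ≤ t} := by
  rcases lt_or_ge t 0 with ht | ht
  · convert isClosed_empty
    exact eq_empty_of_forall_notMem fun z hz => (hz.trans_lt ht).not_ge (norm_nonneg _)
  · simp only [ContinuousLinearMap.opNorm_le_iff ht, ofPred_forall]
    exact isClosed_iInter fun v => isClosed_le (hf v).norm continuous_const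

lemma exists_norm_le_of_continuous_eval {X C : Type*} [SeminormedAddCommGroup X] [NormedSpace ℝ X]
    [CompleteSpace X] [TopologicalSpace C] [CompactSpace C] {f : C → StrongDual ℝ X}
    (hf : ∀ x, Continuous fun c => f c x) : ∃ M, ∀ c, ‖f c‖ ≤ M := by
  refine banach_steinhaus fun x => ?_
  obtain ⟨M, hM⟩ := (isCompact_range (hf x).norm).bddAbove
  exact ⟨M, fun c => hM ⟨c, rfl⟩⟩

lemma exists_tendsto_eval_of_norm_le {V ι : Type*} [SeminormedAddCommGroup V] [NormedSpace ℝ V]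
    (U : Ultrafilter ι) {f : ι → StrongDual ℝ V} {M : ℝ} (hf : ∀ i, ‖f i‖ ≤ M) :
    ∃ φ : StrongDual ℝ V, ∀ v, Tendsto (fun i => f i v) U (𝓝 (φ v)) := by
  obtain ⟨φ, -, hφ⟩ := (WeakDual.isCompact_closedBall (𝕜 := ℝ) (0 : StrongDual ℝ V) M
    ).ultrafilter_le_nhds (U.map fun i => StrongDual.toWeakDual (f i))
      (tendsto_principal.2 (.of_forall fun i => by simpa using hf i))
  exact ⟨WeakDual.toStrongDual φ, fun v => ((WeakDual.eval_continuous v).tendsto φ).comp hφ⟩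

lemma mem_closure_span_of_tendsto_dual {W ι : Type*} [NormedAddCommGroup W] [NormedSpace ℝ W]
    {l : Filter ι} [l.NeBot] {a : ι → W} {c : W}
    (hac : ∀ ξ : StrongDual ℝ W, Tendsto (fun i => ξ (a i)) l (𝓝 (ξ c))) {A : Set W}
    (haA : ∀ᶠ i in l, a i ∈ A) : c ∈ closure (Submodule.span ℝ A : Set W) := by
  by_contra hc
  obtain ⟨ξ, u, hξ, hu⟩ := geometric_hahn_banach_closed_point
    (Submodule.convex _).closure isClosed_closure hc
  refine hu.not_ge (le_of_tendsto (hac ξ) ?_)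
  filter_upwards [haA] with i hi
  exact (hξ _ (subset_closure (Submodule.subset_span hi))).le

section MEmbedded

open NormedSpace

variable {X ι : Type*} [NormedAddCommGroup X] [NormedSpace ℝ X] {a : ι → StrongDual ℝ X}
  {c : StrongDual ℝ X}

set_option maxSynthPendingDepth 3 in
lemma exists_annihilator_tendsto (hM : MEmbeddedSpace X) (U : Ultrafilter ι) {M : ℝ}
    (ha : ∀ i, ‖a i‖ ≤ M) (hac : ∀ x, Tendsto (fun i => a i x) U (𝓝 (c x))) :
    ∃ H : StrongDual ℝ (StrongDual ℝ (StrongDual ℝ X)),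
      (∀ x, H (inclusionInDoubleDual ℝ X x) = 0) ∧
        ∀ ξ : StrongDual ℝ (StrongDual ℝ X), Tendsto (fun i => ξ (a i)) U (𝓝 (ξ c + H ξ)) := by
  obtain ⟨φ, hφ⟩ := exists_tendsto_eval_of_norm_le U
    (f := fun i => inclusionInDoubleDual ℝ (StrongDual ℝ X) (a i))
    fun i => (double_dual_bound ℝ _ _).trans (ha i)
  obtain ⟨g, H, hH, rfl⟩ := hM.1 φ
  obtain rfl : g = c := by
    ext x
    have hgx := hφ (inclusionInDoubleDual ℝ X x)
    rw [_root_.add_apply, hH, add_zero] at hgx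
    exact tendsto_nhds_unique hgx (hac x)
  exact ⟨H, hH, hφ⟩

set_option maxSynthPendingDepth 3 in
lemma norm_sub_add_norm_annihilator_le (hM : MEmbeddedSpace X) {l : Filter ι} [l.NeBot]
    {H : StrongDual ℝ (StrongDual ℝ (StrongDual ℝ X))}
    (hH : ∀ x, H (inclusionInDoubleDual ℝ X x) = 0)
    (hac : ∀ ξ : StrongDual ℝ (StrongDual ℝ X), Tendsto (fun i => ξ (a i)) l (𝓝 (ξ c + H ξ)))
    {y : StrongDual ℝ X} {r : ℝ} (hay : ∀ i, ‖a i - y‖ ≤ r) : ‖c - y‖ + ‖H‖ ≤ r := by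
  obtain ⟨i₀⟩ := l.nonempty_of_neBot
  rw [← (inclusionInDoubleDualLi ℝ (E := StrongDual ℝ X)).norm_map (c - y)]
  refine (hM.2 (c - y) H hH).symm.trans_le ?_
  refine ContinuousLinearMap.opNorm_le_bound _ ((norm_nonneg _).trans (hay i₀)) fun ξ => ?_
  have limit_eq : (inclusionInDoubleDual ℝ (StrongDual ℝ X) (c - y) + H) ξ
      = ξ c + H ξ - ξ y := by
    rw [_root_.add_apply, dual_def, map_sub]
    ring
  rw [limit_eq]
  refine le_of_tendsto ((hac ξ).sub_const (ξ y)).norm (.of_forall fun i => ?_)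
  rw [← map_sub, mul_comm]
  exact (ξ.le_opNorm _).trans (by gcongr; exact hay i)

set_option maxSynthPendingDepth 3 in
theorem mem_closure_span_of_tendsto_eval (hM : MEmbeddedSpace X) (U : Ultrafilter ι)
    (hac : ∀ x, Tendsto (fun i => a i x) U (𝓝 (c x))) {A F : Set (StrongDual ℝ X)}
    (haA : ∀ᶠ i in U, a i ∈ A) (hF : F.Nonempty) {r : ℝ} (haF : ∀ i, ∀ y ∈ F, ‖a i - y‖ ≤ r)
    (hcF : IsLUB ((fun y => ‖c - y‖) '' F) r) :
    c ∈ closure (Submodule.span ℝ A : Set (StrongDual ℝ X)) := by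
  obtain ⟨y₀, hy₀⟩ := hF
  have bounded (i : ι) : ‖a i‖ ≤ r + ‖y₀‖ :=
    calc ‖a i‖ = ‖(a i - y₀) + y₀‖ := by rw [sub_add_cancel]
      _ ≤ r + ‖y₀‖ := (norm_add_le _ _).trans (by gcongr; exact haF i y₀ hy₀)
  obtain ⟨H, hH, hlim⟩ := exists_annihilator_tendsto hM U bounded hac
  have distances_le : r ≤ r - ‖H‖ := hcF.2 <| forall_mem_image.2 fun y hy =>
    le_sub_iff_add_le.2 (norm_sub_add_norm_annihilator_le hM hH hlim fun i => haF i y hy)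
  have hH0 : H = 0 := norm_le_zero_iff.1 (by linarith)
  exact mem_closure_span_of_tendsto_dual (fun ξ => by simpa [hH0] using hlim ξ) haA

end MEmbedded

end DualSpace

section CompactGroup

variable {G : Type*} [Group G] [TopologicalSpace G] [CompactSpace G] [SeparatelyContinuousMul G]

lemma inv_mem_of_isClosed [T2Space G] {H : Submonoid G} (hH : IsClosed (H : Set G)) {x : G}
    (hx : x ∈ H) : x⁻¹ ∈ H := by
  obtain ⟨_, ⟨p, hp, rfl⟩, hidem⟩ := exists_idempotent_in_compact_subsemigroup continuous_mul_const
    ((· * x) '' (H : Set G)) ⟨_, 1, H.one_mem, rfl⟩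
    (hH.isCompact.image (continuous_mul_const x)) (by
      rintro _ ⟨p, hp, rfl⟩ _ ⟨q, hq, rfl⟩
      exact ⟨p * x * q, H.mul_mem (H.mul_mem hp hx) hq, mul_assoc _ _ _⟩)
  rwa [← eq_inv_of_mul_eq_one_left (mul_eq_left.1 hidem)]

lemma exists_subgroup_coe_eq_closure [T2Space G] (M : Submonoid G) :
    ∃ H : Subgroup G, (H : Set G) = closure M :=
  ⟨{ M.topologicalClosure with inv_mem' := inv_mem_of_isClosed isClosed_closure }, rfl⟩

lemma exists_open_dist_le_of_isSeparable {W : Type*} [PseudoMetricSpace W] {Z : Type*}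
    [TopologicalSpace Z] [BaireSpace Z] [Nonempty Z] {f : Z → W}
    (hclosed : ∀ d t, IsClosed {p | dist (f p) d ≤ t})
    (hsep : TopologicalSpace.IsSeparable (range f)) {ε : ℝ} (hε : 0 < ε) :
    ∃ V : Set Z, IsOpen V ∧ V.Nonempty ∧ ∀ p ∈ V, ∀ q ∈ V, dist (f p) (f q) ≤ ε := by
  obtain ⟨D, hD, hDf⟩ := hsep
  have := hD.to_subtype
  obtain ⟨d, hd⟩ := nonempty_interior_of_iUnion_of_closed
    (f := fun d : D => {p | dist (f p) d ≤ ε / 2}) (fun d => hclosed d _)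
    (eq_univ_of_forall fun p => by
      obtain ⟨d, hd, hpd⟩ := Metric.mem_closure_iff.1 (hDf (mem_range_self p)) (ε / 2) (half_pos hε)
      exact mem_iUnion.2 ⟨⟨d, hd⟩, hpd.le⟩)
  refine ⟨_, isOpen_interior, hd, fun p hp q hq => ?_⟩
  have hpd : p ∈ {p | dist (f p) d ≤ ε / 2} := interior_subset hp
  have hqd : q ∈ {p | dist (f p) d ≤ ε / 2} := interior_subset hq
  linarith [dist_triangle_right (f p) (f q) d, hpd.out, hqd.out]

theorem totallyBounded_range_of_isSeparable [BaireSpace G] {W : Type*} [PseudoMetricSpace W]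
    {f : G → W} (hf : ∀ h p q, dist (f (h * p)) (f (h * q)) ≤ dist (f p) (f q))
    (hclosed : ∀ d t, IsClosed {p | dist (f p) d ≤ t})
    (hsep : TopologicalSpace.IsSeparable (range f)) : TotallyBounded (range f) := by
  rw [Metric.totallyBounded_iff]
  intro ε hε
  obtain ⟨V, hVopen, ⟨v, hv⟩, hV⟩ := exists_open_dist_le_of_isSeparable hclosed hsep (half_pos hε)
  obtain ⟨t, ht⟩ := isCompact_univ.elim_finite_subcover (fun h : G => (h * ·) ⁻¹' V)
    (fun h => hVopen.preimage (continuous_const_mul h))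
    fun k _ => mem_iUnion.2 ⟨v * k⁻¹, by simpa using hv⟩
  refine ⟨(fun h : G => f (h⁻¹ * v)) '' t, t.finite_toSet.image _, ?_⟩
  rintro _ ⟨k, rfl⟩
  obtain ⟨h, hht, hhk⟩ := mem_iUnion₂.1 (ht (mem_univ k))
  refine mem_iUnion₂.2 ⟨_, mem_image_of_mem _ hht, ?_⟩
  calc dist (f k) (f (h⁻¹ * v)) = dist (f (h⁻¹ * (h * k))) (f (h⁻¹ * v)) := by
        rw [inv_mul_cancel_left]
    _ ≤ dist (f (h * k)) (f v) := hf _ _ _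
    _ ≤ ε / 2 := hV _ hhk _ hv
    _ < ε := half_lt_self hε

end CompactGroup

section Radius

open Filter

lemma not_totallyBounded_of_pairwise_lt_dist {ι W : Type*} [Infinite ι] [PseudoMetricSpace W]
    {y : ι → W} {ρ : ℝ} (hρ : 0 < ρ) (hy : Pairwise fun m n => ρ < dist (y m) (y n)) :
    ¬ TotallyBounded (range y) := by
  intro htb
  obtain ⟨t, ht, hcover⟩ := Metric.totallyBounded_iff.1 htb (ρ / 2) (by positivity)
  have near (n : ι) : ∃ z : t, dist (y n) z < ρ / 2 := by
    obtain ⟨z, hz, hnz⟩ := mem_iUnion₂.1 (hcover (mem_range_self n))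
    exact ⟨⟨z, hz⟩, hnz⟩
  choose z hz using near
  have := ht.to_subtype
  obtain ⟨m, n, hmn, hzmn⟩ := Finite.exists_ne_map_eq_of_infinite z
  refine (hy hmn).not_ge ?_
  linarith [hz m, hzmn ▸ hz n, dist_triangle_right (y m) (y n) (z m)]

lemma exists_forall_lt_norm_sub {W : Type*} [SeminormedAddCommGroup W] [NormedSpace ℝ W]
    {B F : Set W} (hB : Convex ℝ B) (hF : F.Nonempty) {r ρ : ℝ} (hρ : ρ < r)
    (hBF : ∀ c ∈ B, IsLUB ((fun y => ‖c - y‖) '' F) r) (s : Finset W) (hs : ↑s ⊆ B) :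
    ∃ y ∈ F, ∀ z ∈ s, ρ < ‖z - y‖ := by
  classical
  rcases s.eq_empty_or_nonempty with rfl | hsne
  · exact hF.imp fun y hy => ⟨hy, by simp⟩
  have hcard : (0 : ℝ) < s.card := by exact_mod_cast hsne.card_pos
  have centroid_mem : ∑ z ∈ s, (s.card : ℝ)⁻¹ • z ∈ B :=
    hB.sum_mem (fun _ _ => by positivity) (by simp [hcard.ne']) fun z hz => hs hz
  obtain ⟨_, ⟨y, hy, rfl⟩, hlt⟩ := (lt_isLUB_iff (hBF _ centroid_mem)).1
    (sub_lt_self r (div_pos (sub_pos.2 hρ) hcard))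
  refine ⟨y, hy, fun w hw => ?_⟩
  by_contra! hwy
  have sum_le : ∑ z ∈ s, ‖z - y‖ ≤ s.card * r - (r - ρ) := by
    rw [← Finset.add_sum_erase s _ hw]
    have := Finset.sum_le_card_nsmul (s.erase w) (‖· - y‖) r fun z hz =>
      (hBF z (hs (Finset.mem_of_mem_erase hz))).1 (mem_image_of_mem _ hy)
    rw [Finset.card_erase_of_mem hw, nsmul_eq_mul, Nat.cast_pred hsne.card_pos] at this
    linarith
  refine hlt.not_ge ?_
  calc ‖∑ z ∈ s, (s.card : ℝ)⁻¹ • z - y‖ = ‖∑ z ∈ s, (s.card : ℝ)⁻¹ • (z - y)‖ := by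
        simp only [smul_sub, Finset.sum_sub_distrib, Finset.sum_const, ← Nat.cast_smul_eq_nsmul ℝ,
          smul_inv_smul₀ hcard.ne']
    _ ≤ ∑ z ∈ s, ‖(s.card : ℝ)⁻¹ • (z - y)‖ := norm_sum_le _ _
    _ = (s.card : ℝ)⁻¹ * ∑ z ∈ s, ‖z - y‖ := by simp [norm_smul, Finset.mul_sum]
    _ ≤ (s.card : ℝ)⁻¹ * (s.card * r - (r - ρ)) := by gcongr
    _ = r - (r - ρ) / s.card := by field_simp

lemma exists_seq_pairwise_lt_dist {W : Type*} [SeminormedAddCommGroup W] [NormedSpace ℝ W]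
    {B F : Set W} (hB : Convex ℝ B) (hFB : F ⊆ B) (hF : F.Nonempty) {r ρ : ℝ} (hρ : ρ < r)
    (hBF : ∀ c ∈ B, IsLUB ((fun y => ‖c - y‖) '' F) r) :
    ∃ y : ℕ → W, (∀ n, y n ∈ F) ∧ Pairwise fun m n => ρ < dist (y m) (y n) := by
  have : Std.Symm fun y z : W => ρ < dist y z := ⟨fun y z h => dist_comm y z ▸ h⟩
  refine exists_seq_of_forall_finset_exists' (· ∈ F) (fun y z => ρ < dist y z) fun s hs => ?_
  simpa only [dist_eq_norm] using
    exists_forall_lt_norm_sub hB hF hρ hBF s fun z hz => hFB (hs z hz)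

variable {X : Type*} [NormedAddCommGroup X] [NormedSpace ℝ X]

lemma isSeparable_image_closure (hM : MEmbeddedSpace X) {Z : Type*} [TopologicalSpace Z]
    {f : Z → StrongDual ℝ X} (hf : ∀ x, Continuous fun z => f z x) {F : Set (StrongDual ℝ X)}
    (hF : F.Nonempty) {r : ℝ} (hfF : ∀ z, IsLUB ((fun y => ‖f z - y‖) '' F) r) {D : Set Z}
    (hD : D.Countable) : TopologicalSpace.IsSeparable (f '' closure D) := by
  refine ((hD.image f).isSeparable.span (R := ℝ)).closure.mono ?_
  rintro _ ⟨z, hz, rfl⟩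
  obtain ⟨U, hDU, hU⟩ := mem_closure_iff_ultrafilter.1 hz
  exact mem_closure_span_of_tendsto_eval hM U (fun x => ((hf x).tendsto z).mono_left hU)
    (mem_of_superset hDU fun p hp => mem_image_of_mem f hp) hF
    (fun p y hy => (hfF p).1 (mem_image_of_mem _ hy)) (hfF z)

theorem radius_orbit_nonpos (hM : MEmbeddedSpace X) {G : Type*} [Group G] [TopologicalSpace G]
    [CompactSpace G] [T2Space G] [SeparatelyContinuousMul G] {f : G → StrongDual ℝ X}
    (hf : ∀ x, Continuous fun p => f p x)
    (hne : ∀ h p q, ‖f (h * p) - f (h * q)‖ ≤ ‖f p - f q‖) {B : Set (StrongDual ℝ X)}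
    (hB : Convex ℝ B) (hfB : range f ⊆ B) {r : ℝ}
    (hr : ∀ c ∈ B, IsLUB ((fun y => ‖c - y‖) '' range f) r) : r ≤ 0 := by
  by_contra! hr₀
  obtain ⟨y, hyf, hy⟩ := exists_seq_pairwise_lt_dist hB hfB (range_nonempty f) (half_lt_self hr₀) hr
  choose g hg using hyf
  obtain ⟨H, hH⟩ := exists_subgroup_coe_eq_closure (Submonoid.closure (range g))
  have hgH (n : ℕ) : g n ∈ H :=
    hH.superset (subset_closure (Submonoid.subset_closure (mem_range_self n)))
  have hcountable : (Submonoid.closure (range g) : Set G).Countable := by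
    rw [← FreeMonoid.mrange_lift, MonoidHom.coe_mrange]
    exact countable_range _
  have hHsep : TopologicalSpace.IsSeparable (range fun h : H => f h) := by
    rw [← Function.comp_def f, range_comp, Subtype.range_coe, hH]
    exact isSeparable_image_closure hM hf (range_nonempty f)
      (fun p => hr _ (hfB (mem_range_self p))) hcountable
  have : CompactSpace H :=
    isCompact_iff_compactSpace.1 (hH ▸ isClosed_closure.isCompact)
  have : SeparatelyContinuousMul H := H.toSubmonoid.separatelyContinuousMul
  have hHtb := totallyBounded_range_of_isSeparable (f := fun h : H => f h)
    (fun h p q => by simpa only [dist_eq_norm, Subgroup.coe_mul] using hne h p q)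
    (fun d t => by
      simpa only [dist_eq_norm] using isClosed_setOf_norm_le_of_continuous_eval
        (f := fun p : H => f p - d)
        (fun x => ((hf x).comp continuous_subtype_val).sub continuous_const) t) hHsep
  refine not_totallyBounded_of_pairwise_lt_dist (half_pos hr₀) hy (hHtb.subset ?_)
  rintro _ ⟨n, rfl⟩
  exact ⟨⟨g n, hgH n⟩, hg n⟩

end Radius

section FixedPoint

variable {C P : Type*} [TopologicalSpace C]

/-- A nonempty closed subset `A` of `C` which is invariant under all the maps `act p` and convex
when `C` is regarded as a subset of the vector space `W` through `j`. -/
structure IsClosedConvexInvariant {W : Type*} [AddCommGroup W] [Module ℝ W] (j : C → W)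
    (act : P → C → C) (A : Set C) : Prop where
  isClosed : IsClosed A
  nonempty : A.Nonempty
  convex_image : Convex ℝ (j '' A)
  mapsTo : ∀ p, MapsTo (act p) A A

lemma IsClosedConvexInvariant.exists_minimal_subset [CompactSpace C] {W : Type*} [AddCommGroup W]
    [Module ℝ W] {j : C → W} (hj : Function.Injective j) {act : P → C → C} {A : Set C}
    (hA : IsClosedConvexInvariant j act A) :
    ∃ B ⊆ A, Minimal (IsClosedConvexInvariant j act) B := by
  refine zorn_superset_nonempty {B | IsClosedConvexInvariant j act B}
    (fun c hc hchain hcne => ⟨⋂₀ c, ?_, fun B hB => sInter_subset_of_mem hB⟩) A hA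
  have := hcne.to_subtype
  refine ⟨isClosed_sInter fun B hB => (hc hB).isClosed, ?_, ?_, fun p x hx B hB => ?_⟩
  · exact IsCompact.nonempty_sInter_of_directed_nonempty_isCompact_isClosed
      (show IsChain (· ⊇ ·) c from hchain.symm).directedOn (fun B hB => (hc hB).nonempty)
      (fun B hB => (hc hB).isClosed.isCompact) fun B hB => (hc hB).isClosed
  · rw [sInter_eq_biInter, hj.injOn.image_biInter_eq hcne]
    exact convex_iInter₂ fun B hB => (hc hB).convex_image
  · exact (hc hB).mapsTo p (hx B hB)

variable {V : Type*} [NormedAddCommGroup V] [NormedSpace ℝ V] {j : C → StrongDual ℝ V}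
  {act : P → C → C} {B F : Set C}

lemma norm_sub_le_of_minimal (hj : ∀ v, Continuous fun c => j c v)
    (hact : ∀ p c d, ‖j (act p c) - j (act p d)‖ ≤ ‖j c - j d‖)
    (hB : Minimal (IsClosedConvexInvariant j act) B) (hFact : ∀ p, F ⊆ act p '' F) {c : C}
    (hc : c ∈ B) {t : ℝ} (hct : ∀ y ∈ F, ‖j c - j y‖ ≤ t) {d : C} (hd : d ∈ B) :
    ∀ y ∈ F, ‖j d - j y‖ ≤ t := by
  let D : Set (StrongDual ℝ V) := ⋂ y ∈ F, Metric.closedBall (j y) t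
  have mem_D {φ : StrongDual ℝ V} : φ ∈ D ↔ ∀ y ∈ F, ‖φ - j y‖ ≤ t := by
    simp only [D, mem_iInter, mem_closedBall_iff_norm]
  have hBD : IsClosedConvexInvariant j act (B ∩ j ⁻¹' D) := by
    refine ⟨hB.prop.isClosed.inter ?_, ⟨c, hc, mem_D.2 hct⟩, ?_, fun p x hx =>
      ⟨hB.prop.mapsTo p hx.1, mem_D.2 fun y hy => ?_⟩⟩
    · simp only [D, preimage_iInter, Metric.closedBall, dist_eq_norm]
      exact isClosed_biInter fun y _ => isClosed_setOf_norm_le_of_continuous_eval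
        (fun v => (hj v).sub continuous_const) t
    · rw [image_inter_preimage]
      exact hB.prop.convex_image.inter (convex_iInter₂ fun y _ => convex_closedBall _ _)
    · obtain ⟨z, hz, rfl⟩ := hFact p hy
      exact (hact p x z).trans (mem_D.1 hx.2 z hz)
  exact mem_D.1 (hB.le_of_le hBD inter_subset_left hd).2

lemma exists_isLUB_norm_sub_of_minimal (hj : ∀ v, Continuous fun c => j c v) {M : ℝ}
    (hM : ∀ c, ‖j c‖ ≤ M) (hact : ∀ p c d, ‖j (act p c) - j (act p d)‖ ≤ ‖j c - j d‖)
    (hB : Minimal (IsClosedConvexInvariant j act) B) (hF : F.Nonempty)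
    (hFact : ∀ p, F ⊆ act p '' F) :
    ∃ r : ℝ, ∀ c ∈ B, IsLUB ((fun y => ‖j c - j y‖) '' F) r := by
  obtain ⟨c₀, hc₀⟩ := hB.prop.nonempty
  obtain ⟨r, hr⟩ := Real.exists_isLUB (hF.image fun y => ‖j c₀ - j y‖) ⟨M + M, by
    rintro _ ⟨y, -, rfl⟩
    exact norm_sub_le_of_le (hM _) (hM _)⟩
  refine ⟨r, fun c hc => (isLUB_congr ?_).1 hr⟩
  ext t
  simp only [mem_upperBounds, forall_mem_image]
  exact ⟨fun h => norm_sub_le_of_minimal hj hact hB hFact hc₀ h hc,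
    fun h => norm_sub_le_of_minimal hj hact hB hFact hc h hc₀⟩

variable {X : Type*} [NormedAddCommGroup X] [NormedSpace ℝ X] [CompleteSpace X] [CompactSpace C]

theorem exists_common_fixedPoint_of_compact_group (hM : MEmbeddedSpace X)
    {j : C → StrongDual ℝ X} (hjinj : Function.Injective j) (hj : ∀ x, Continuous fun c => j c x)
    {E : Type*} [Semigroup E] [TopologicalSpace E] {act : E → C → C}
    (hmul : ∀ p q c, act (p * q) c = act p (act q c)) (horb : ∀ c, Continuous fun p => act p c)
    (hact : ∀ p c d, ‖j (act p c) - j (act p d)‖ ≤ ‖j c - j d‖) {G : Type*} [Group G]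
    [TopologicalSpace G] [CompactSpace G] [T2Space G] [SeparatelyContinuousMul G] {ι : G →ₙ* E}
    (hι : Continuous ι) (hrange : ∀ p, (p * ·) '' range ι = range ι) {A : Set C}
    (hA : IsClosedConvexInvariant j act A) : ∃ c ∈ A, ∀ p, act p c = c := by
  obtain ⟨B, hBA, hB⟩ := hA.exists_minimal_subset hjinj
  obtain ⟨x₀, hx₀⟩ := hB.prop.nonempty
  let orbit (g : G) : C := act (ι g) x₀
  have horbit : range orbit ⊆ B := by
    rintro _ ⟨g, rfl⟩
    exact hB.prop.mapsTo _ hx₀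
  have orbit_subset (p : E) : range orbit ⊆ act p '' range orbit := by
    rintro _ ⟨g, rfl⟩
    obtain ⟨_, ⟨h, rfl⟩, hh⟩ := (hrange p).superset (mem_range_self g)
    exact ⟨_, mem_range_self h, (hmul _ _ _).symm.trans (congrArg (act · x₀) hh)⟩
  obtain ⟨M, hjM⟩ := exists_norm_le_of_continuous_eval hj
  obtain ⟨r, hr⟩ := exists_isLUB_norm_sub_of_minimal hj hjM hact hB (range_nonempty orbit)
    orbit_subset
  have hr₀ : r ≤ 0 := by
    refine radius_orbit_nonpos hM (f := j ∘ orbit)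
      (fun x => (hj x).comp ((horb x₀).comp hι)) (fun h p q => ?_) hB.prop.convex_image ?_ ?_
    · simpa only [Function.comp_apply, orbit, map_mul, hmul] using hact (ι h) _ _
    · rw [range_comp]
      exact image_mono horbit
    · rintro _ ⟨c, hc, rfl⟩
      rw [range_comp, image_image]
      exact hr c hc
  have hfixed (p : E) : act p (orbit 1) = orbit 1 := hjinj <| by
    refine sub_eq_zero.1 (norm_le_zero_iff.1 (le_trans ?_ hr₀))
    exact (hr _ (hB.prop.mapsTo p (horbit (mem_range_self 1)))).1
      (mem_image_of_mem _ (mem_range_self 1))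
  exact ⟨_, hBA (horbit (mem_range_self 1)), hfixed⟩

end FixedPoint

section NonexpansiveFixing

variable {C W : Type*} [SeminormedAddCommGroup W]

/-- The nonexpansive self-maps of `C` which fix `F` pointwise, the distance on `C` being that of
`W`, in which `C` is embedded by `j`. -/
def nonexpansiveFixing (j : C → W) (F : Set C) : Set (C → C) :=
  {T | (∀ c d, ‖j (T c) - j (T d)‖ ≤ ‖j c - j d‖) ∧ ∀ c ∈ F, T c = c}

variable {j : C → W} {F : Set C}

lemma id_mem_nonexpansiveFixing : id ∈ nonexpansiveFixing j F :=
  ⟨fun _ _ => le_rfl, fun _ _ => rfl⟩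

lemma comp_mem_nonexpansiveFixing {T U : C → C} (hT : T ∈ nonexpansiveFixing j F)
    (hU : U ∈ nonexpansiveFixing j F) : T ∘ U ∈ nonexpansiveFixing j F :=
  ⟨fun c d => (hT.1 _ _).trans (hU.1 c d), fun c hc => by
    rw [Function.comp_apply, hU.2 c hc, hT.2 c hc]⟩

lemma convex_image_eval_nonexpansiveFixing [NormedSpace ℝ W] (hj : Function.Injective j)
    (hcv : Convex ℝ (range j)) (x : C) :
    Convex ℝ (j '' (Function.eval x '' nonexpansiveFixing j F)) := by
  rintro _ ⟨_, ⟨T, hT, rfl⟩, rfl⟩ _ ⟨_, ⟨U, hU, rfl⟩, rfl⟩ a b ha hb hab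
  choose V hV using fun c => hcv (mem_range_self (T c)) (mem_range_self (U c)) ha hb hab
  refine ⟨_, ⟨V, ⟨fun c d => ?_, fun c hc => hj ?_⟩, rfl⟩, hV _⟩
  · calc ‖j (V c) - j (V d)‖ = ‖a • (j (T c) - j (T d)) + b • (j (U c) - j (U d))‖ := by
          rw [hV, hV]
          congr 1
          module
      _ ≤ a * ‖j (T c) - j (T d)‖ + b * ‖j (U c) - j (U d)‖ := by
          simpa only [norm_smul, Real.norm_of_nonneg ha, Real.norm_of_nonneg hb] using
            norm_add_le (a • (j (T c) - j (T d))) (b • (j (U c) - j (U d)))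
      _ ≤ a * ‖j c - j d‖ + b * ‖j c - j d‖ := by
          gcongr
          exacts [hT.1 c d, hU.1 c d]
      _ = ‖j c - j d‖ := by rw [← add_mul, hab, one_mul]
  · rw [hV, hT.2 c hc, hU.2 c hc, ← add_smul, hab, one_smul]

end NonexpansiveFixing

section Retraction

lemma exists_minimalFor_of_isClosed {Z α : Type*} [TopologicalSpace Z] [CompactSpace Z]
    [Preorder α] {N : Set Z} (hN : IsClosed N) (hNne : N.Nonempty) {δ : Z → α}
    (hδ : ∀ a, IsClosed {z | δ z ≤ a}) : ∃ z, MinimalFor (· ∈ N) δ z := by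
  have := hNne.to_subtype
  have chain_bounded (c : Set N) (hc : IsChain (fun w z : N => δ z ≤ δ w) c) (hcne : c.Nonempty) :
      ∃ z : N, ∀ w ∈ c, δ z ≤ δ w := by
    have := hcne.to_subtype
    obtain ⟨z, hz⟩ := IsCompact.nonempty_iInter_of_directed_nonempty_isCompact_isClosed
      (fun w : c => N ∩ {z | δ z ≤ δ w}) (fun v w => by
        rcases hc.total v.2 w.2 with h | h
        · exact ⟨w, fun z hz => ⟨hz.1, hz.2.out.trans h⟩, subset_rfl⟩
        · exact ⟨v, subset_rfl, fun z hz => ⟨hz.1, hz.2.out.trans h⟩⟩)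
      (fun w => ⟨w, w.1.2, le_refl (δ w)⟩) (fun w => (hN.inter (hδ _)).isCompact)
      fun w => hN.inter (hδ _)
    rw [mem_iInter] at hz
    exact ⟨⟨z, (hz ⟨_, hcne.some_mem⟩).1⟩, fun w hw => (hz ⟨w, hw⟩).2⟩
  obtain ⟨z, hz⟩ := exists_maximal_of_nonempty_chains_bounded (r := fun w z : N => δ z ≤ δ w)
    chain_bounded fun h₁ h₂ => h₂.trans h₁
  exact ⟨z, z.2, fun w hw => hz ⟨w, hw⟩⟩

variable {C V : Type*} [TopologicalSpace C] [NormedAddCommGroup V] [NormedSpace ℝ V]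
  {j : C → StrongDual ℝ V}

lemma t2Space_of_continuous_eval (hjinj : Function.Injective j)
    (hj : ∀ v, Continuous fun c => j c v) : T2Space C :=
  T2Space.of_injective_continuous (f := fun c v => j c v)
    (fun _ _ h => hjinj (ContinuousLinearMap.ext (congrFun h))) (continuous_pi hj)

lemma isClosed_setOf_norm_sub_apply_le (hj : ∀ v, Continuous fun c => j c v) (c d : C) (t : ℝ) :
    IsClosed {T : C → C | ‖j (T c) - j (T d)‖ ≤ t} :=
  isClosed_setOf_norm_le_of_continuous_eval (f := fun T : C → C => j (T c) - j (T d))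
    (fun v => ((hj v).comp (continuous_apply c)).sub ((hj v).comp (continuous_apply d))) t

lemma isClosed_nonexpansiveFixing [T2Space C] (hj : ∀ v, Continuous fun c => j c v) (F : Set C) :
    IsClosed (nonexpansiveFixing j F) := by
  simp only [nonexpansiveFixing, ofPred_and, ofPred_forall]
  exact (isClosed_iInter fun c => isClosed_iInter fun d =>
    isClosed_setOf_norm_sub_apply_le hj c d _).inter <| isClosed_biInter fun c _ =>
      isClosed_eq (continuous_apply c) continuous_const

lemma exists_minimalFor_nonexpansiveFixing [CompactSpace C] [T2Space C]
    (hj : ∀ v, Continuous fun c => j c v) (F : Set C) :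
    ∃ r, MinimalFor (· ∈ nonexpansiveFixing j F) (fun T c d => ‖j (T c) - j (T d)‖) r := by
  refine exists_minimalFor_of_isClosed (isClosed_nonexpansiveFixing hj F)
    ⟨id, id_mem_nonexpansiveFixing⟩ fun a => ?_
  simp only [Pi.le_def, ofPred_forall]
  exact isClosed_iInter fun c => isClosed_iInter fun d =>
    isClosed_setOf_norm_sub_apply_le hj c d _

-- Bruck's theorem. A nonexpansive map `r` fixing the common fixed points whose distances
-- `‖r c - r d‖` are minimal is a retraction: if `T (r x)` is a common fixed point, then `T ∘ r`
-- collapses `x` and `T (r x)`, hence so does `r`, i.e. `r x = T (r x)`.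
theorem exists_nonexpansive_retraction [CompactSpace C] (hjinj : Function.Injective j)
    (hj : ∀ v, Continuous fun c => j c v) (hcv : Convex ℝ (range j)) {P : Type*} {act : P → C → C}
    (hact : ∀ p c d, ‖j (act p c) - j (act p d)‖ ≤ ‖j c - j d‖)
    (hfix : ∀ A, IsClosedConvexInvariant j act A → ∃ c ∈ A, ∀ p, act p c = c) :
    ∃ r : C → C, (∀ c p, act p (r c) = r c) ∧ (∀ c, (∀ p, act p c = c) → r c = c) ∧
      ∀ c d, ‖j (r c) - j (r d)‖ ≤ ‖j c - j d‖ := by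
  have := t2Space_of_continuous_eval hjinj hj
  let F : Set C := {c | ∀ p, act p c = c}
  obtain ⟨r, hrN, hrmin⟩ := exists_minimalFor_nonexpansiveFixing hj F
  refine ⟨r, fun x => ?_, hrN.2, hrN.1⟩
  have hNx : IsClosedConvexInvariant j act (Function.eval (r x) '' nonexpansiveFixing j F) :=
    { isClosed := ((isClosed_nonexpansiveFixing hj _).isCompact.image
        (continuous_apply (r x))).isClosed
      nonempty := ⟨_, id, id_mem_nonexpansiveFixing, rfl⟩
      convex_image := convex_image_eval_nonexpansiveFixing hjinj hcv (r x)
      mapsTo := by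
        rintro p _ ⟨T, hT, rfl⟩
        exact ⟨act p ∘ T, comp_mem_nonexpansiveFixing ⟨hact p, fun c hc => hc p⟩ hT, rfl⟩ }
  obtain ⟨_, ⟨T, hTN, rfl⟩, hfixed⟩ := hfix _ hNx
  have hrz : r (T (r x)) = T (r x) := hrN.2 _ hfixed
  have hTz : T (T (r x)) = T (r x) := hTN.2 _ hfixed
  have hmin := hrmin (comp_mem_nonexpansiveFixing hTN hrN) (fun c d => hTN.1 _ _) x (T (r x))
  have hrx : r x = T (r x) := hjinj <| by
    simpa only [Function.comp_apply, hrz, hTz, sub_self, norm_zero, norm_le_zero_iff,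
      sub_eq_zero] using hmin
  rw [hrx]
  exact hfixed

end Retraction

section EnvelopingSemigroup

variable {C S : Type*} [TopologicalSpace C] [Semigroup S] [TopologicalSpace S] {ρ : S → C → C}

/-- `ρ` is an action of `S` on `C` with continuous orbit maps, whose enveloping semigroup, the
pointwise closure of the maps `ρ s`, consists of continuous maps. -/
structure HasContinuousEnvelope (ρ : S → C → C) : Prop where
  map_mul : ∀ s t c, ρ (s * t) c = ρ s (ρ t c)
  continuous_orbit : ∀ c, Continuous fun s => ρ s c
  continuous_of_mem_closure : ∀ T ∈ closure (range ρ), Continuous T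

lemma HasContinuousEnvelope.comp_mem_closure (h : HasContinuousEnvelope ρ) {T U : C → C}
    (hT : T ∈ closure (range ρ)) (hU : U ∈ closure (range ρ)) : T ∘ U ∈ closure (range ρ) := by
  have continuous_precomp : Continuous fun T : C → C => T ∘ U :=
    continuous_pi fun c => continuous_apply (U c)
  rw [← closure_closure]
  refine map_mem_closure (f := (· ∘ U)) continuous_precomp hT ?_
  rintro _ ⟨s, rfl⟩
  have continuous_postcomp : Continuous fun U : C → C => ρ s ∘ U :=
    continuous_pi fun c => (h.continuous_of_mem_closure _ (subset_closure ⟨s, rfl⟩)).comp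
      (continuous_apply c)
  refine map_mem_closure continuous_postcomp hU ?_
  rintro _ ⟨t, rfl⟩
  exact ⟨s * t, funext fun c => h.map_mul s t c⟩

/-- The enveloping semigroup `E(S,C)` under composition, as a type. The proof `h` is a parameter
because the closure of the maps `ρ s` is only closed under composition thanks to continuity. -/
def EnvelopingSemigroup (_h : HasContinuousEnvelope ρ) : Type _ := closure (range ρ)

namespace EnvelopingSemigroup

variable {h : HasContinuousEnvelope ρ}

instance : TopologicalSpace (EnvelopingSemigroup h) :=
  inferInstanceAs (TopologicalSpace (closure (range ρ)))

instance [T2Space C] : T2Space (EnvelopingSemigroup h) :=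
  inferInstanceAs (T2Space (closure (range ρ)))

instance [CompactSpace C] : CompactSpace (EnvelopingSemigroup h) :=
  isCompact_iff_compactSpace.1 isClosed_closure.isCompact

instance : Semigroup (EnvelopingSemigroup h) where
  mul T U := ⟨T.1 ∘ U.1, h.comp_mem_closure T.2 U.2⟩
  mul_assoc _ _ _ := rfl

lemma continuous_eval (c : C) : Continuous fun T : EnvelopingSemigroup h => T.1 c :=
  (continuous_apply c).comp continuous_subtype_val

instance : SeparatelyContinuousMul (EnvelopingSemigroup h) where
  continuous_const_mul {T} := Continuous.subtype_mk
    (continuous_pi fun c => (h.continuous_of_mem_closure _ T.2).comp (continuous_eval c)) _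
  continuous_mul_const {U} := Continuous.subtype_mk
    (continuous_pi fun c => continuous_eval (U.1 c)) _

/-- The canonical map `s ↦ ρ s` of `S` into its enveloping semigroup. -/
def of (h : HasContinuousEnvelope ρ) : C(S, EnvelopingSemigroup h) :=
  ⟨fun s => ⟨ρ s, subset_closure (mem_range_self s)⟩,
    (continuous_pi h.continuous_orbit).subtype_mk _⟩

lemma of_mul (s t : S) : of h (s * t) = of h s * of h t :=
  Subtype.ext (funext (h.map_mul s t))

lemma denseRange_of : DenseRange (of h) := fun T => by
  refine closure_subtype.2 (closure_mono ?_ T.2)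
  rintro _ ⟨s, rfl⟩
  exact ⟨of h s, mem_range_self s, rfl⟩

lemma mem_of_isClosed {Q : Set (C → C)} (hQ : IsClosed Q) (hρ : ∀ s, ρ s ∈ Q)
    (T : EnvelopingSemigroup h) : T.1 ∈ Q :=
  closure_minimal (range_subset_iff.2 hρ) hQ T.2

end EnvelopingSemigroup

theorem exists_common_fixedPoint_of_hasLIM [CompactSpace C] {X : Type*} [NormedAddCommGroup X]
    [NormedSpace ℝ X] [CompleteSpace X] (hM : MEmbeddedSpace X) {j : C → StrongDual ℝ X}
    (hjinj : Function.Injective j) (hj : ∀ x, Continuous fun c => j c x)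
    (h : HasContinuousEnvelope ρ) (hρ : ∀ s c d, ‖j (ρ s c) - j (ρ s d)‖ ≤ ‖j c - j d‖)
    (hLIM : HasLIM S (WAPset S)) {A : Set C} (hA : IsClosedConvexInvariant j ρ A) :
    ∃ c ∈ A, ∀ s, ρ s c = c := by
  have := t2Space_of_continuous_eval hjinj hj
  obtain ⟨m, hm₁, hm⟩ := exists_leftInvariant_of_hasLIM_WAPset EnvelopingSemigroup.of_mul
    (EnvelopingSemigroup.denseRange_of (h := h)) hLIM
  have hm₀ : m 0 ≠ m 1 := by
    rw [map_zero, hm₁]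
    exact zero_ne_one
  have : Nonempty (EnvelopingSemigroup h) := by
    by_contra! hE
    exact hm₀ (congrArg m (Subsingleton.elim _ _))
  obtain ⟨R, hR⟩ := exists_isLeast_isClosedRightIdeal fun R₁ R₂ h₁ h₂ =>
    IsClosedRightIdeal.inter_nonempty_of_leftInvariant hm₀ hm h₁ h₂
  obtain ⟨G, _, _, _, _, _, ι, hι, hrange⟩ := exists_compact_group_mulHom_of_isLeast hR
  have hA' : IsClosedConvexInvariant j (fun T : EnvelopingSemigroup h => T.1) A :=
    { hA with
      mapsTo := fun T c hc => EnvelopingSemigroup.mem_of_isClosed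
        (hA.isClosed.preimage (continuous_apply c)) (fun s => hA.mapsTo s hc) T }
  obtain ⟨c, hcA, hc⟩ := exists_common_fixedPoint_of_compact_group hM hjinj hj
    (fun _ _ _ => rfl) EnvelopingSemigroup.continuous_eval
    (fun T c d => EnvelopingSemigroup.mem_of_isClosed
      (isClosed_setOf_norm_sub_apply_le hj c d _) (fun s => hρ s c d) T) hι hrange hA'
  exact ⟨c, hcA, fun s => hc (EnvelopingSemigroup.of h s)⟩

theorem exists_fixedPoint_and_retraction_of_hasLIM [CompactSpace C] [Nonempty C] {X : Type*}
    [NormedAddCommGroup X] [NormedSpace ℝ X] [CompleteSpace X] (hM : MEmbeddedSpace X)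
    {j : C → StrongDual ℝ X} (hjinj : Function.Injective j) (hj : ∀ x, Continuous fun c => j c x)
    (hcv : Convex ℝ (range j)) (h : HasContinuousEnvelope ρ)
    (hρ : ∀ s c d, ‖j (ρ s c) - j (ρ s d)‖ ≤ ‖j c - j d‖) (hLIM : HasLIM S (WAPset S)) :
    (∃ c, ∀ s, ρ s c = c) ∧
    ∃ r : C → C, (∀ c s, ρ s (r c) = r c) ∧ (∀ c, (∀ s, ρ s c = c) → r c = c) ∧
      ∀ c d, ‖j (r c) - j (r d)‖ ≤ ‖j c - j d‖ := by
  have hfix (A : Set C) (hA : IsClosedConvexInvariant j ρ A) : ∃ c ∈ A, ∀ s, ρ s c = c :=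
    exists_common_fixedPoint_of_hasLIM hM hjinj hj h hρ hLIM hA
  obtain ⟨c, -, hc⟩ := hfix univ
    ⟨isClosed_univ, univ_nonempty, by rwa [image_univ], fun s => mapsTo_univ _ _⟩
  exact ⟨⟨c, hc⟩, exists_nonexpansive_retraction hjinj hj hcv hρ hfix⟩

end EnvelopingSemigroup

lemma continuous_wstarTop_eval {X : Type*} [SeminormedAddCommGroup X] [NormedSpace ℝ X] (x : X) :
    @Continuous _ _ (wstarTop X) _ fun φ : StrongDual ℝ X => φ x :=
  @Continuous.comp _ _ _ (wstarTop X) _ _ _ _ (continuous_apply x) continuous_induced_dom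

theorem fixedPoint_and_retract_MEmbedded_of_WAP_hasLIM_general
    {S : Type u} [Semigroup S] [TopologicalSpace S]
    {X : Type v} [NormedAddCommGroup X] [NormedSpace ℝ X] [CompleteSpace X]
    (hM : MEmbeddedSpace X)
    (K : Set (StrongDual ℝ X)) (π : S → StrongDual ℝ X → StrongDual ℝ X)
    (hKne : K.Nonempty) (hKcv : Convex ℝ K) (hKcpt : @IsCompact _ (wstarTop X) K)
    (hinv : ∀ s : S, MapsTo (π s) K K)
    (hact : ∀ s t : S, ∀ x ∈ K, π (s * t) x = π s (π t x))
    (horb : ∀ x ∈ K, @Continuous S _ _ (wstarTop X) fun s => π s x)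
    (hne : ∀ s : S, ∀ x ∈ K, ∀ y ∈ K, ‖π s x - π s y‖ ≤ ‖x - y‖)
    (henv : ∀ T : K → K,
      T ∈ @closure (K → K)
          (@Pi.topologicalSpace K (fun _ => K)
            (fun _ => @instTopologicalSpaceSubtype _ (· ∈ K) (wstarTop X)))
          {T' | ∃ s : S, ∀ x : K, (T' x : StrongDual ℝ X) = π s (x : StrongDual ℝ X)} →
      @Continuous K K (@instTopologicalSpaceSubtype _ (· ∈ K) (wstarTop X))
        (@instTopologicalSpaceSubtype _ (· ∈ K) (wstarTop X)) T)
    (hLIM : HasLIM S (WAPset S)) :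
    (∃ x ∈ K, ∀ s : S, π s x = x) ∧
    ∃ r : StrongDual ℝ X → StrongDual ℝ X,
      (∀ x ∈ K, r x ∈ K ∧ ∀ s : S, π s (r x) = r x) ∧
      (∀ x ∈ K, r (r x) = r x) ∧
      (∀ x ∈ K, (∀ s : S, π s x = x) → r x = x) ∧
      (∀ x ∈ K, ∀ y ∈ K, ‖r x - r y‖ ≤ ‖x - y‖) := by
  let _ : TopologicalSpace K := @instTopologicalSpaceSubtype _ (· ∈ K) (wstarTop X)
  have : CompactSpace K := (@isCompact_iff_compactSpace _ (wstarTop X) K).1 hKcpt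
  have : Nonempty K := hKne.to_subtype
  have continuous_eval (x : X) : Continuous fun c : K => (c : StrongDual ℝ X) x :=
    @Continuous.comp _ _ _ _ (wstarTop X) _ _ _ (continuous_wstarTop_eval x)
      (@continuous_subtype_val _ (wstarTop X) _)
  let ρ (s : S) : K → K := (hinv s).restrict
  have hρ : HasContinuousEnvelope ρ :=
    { map_mul := fun s t c => Subtype.ext (hact s t c c.2)
      continuous_orbit := fun c => @Continuous.subtype_mk _ _ (wstarTop X) _ _ _ (horb c c.2) _
      continuous_of_mem_closure := fun T hT => henv T <| closure_mono (by
        rintro _ ⟨s, rfl⟩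
        exact ⟨s, fun _ => rfl⟩) hT }
  obtain ⟨⟨c, hc⟩, r, hr, hrfix, hrne⟩ := exists_fixedPoint_and_retraction_of_hasLIM hM
    Subtype.val_injective continuous_eval (by rwa [Subtype.range_coe]) hρ
    (fun s c d => hne s c c.2 d d.2) hLIM
  refine ⟨⟨c, c.2, fun s => congrArg Subtype.val (hc s)⟩,
    Function.extend Subtype.val (fun c => (r c : StrongDual ℝ X)) id, ?_⟩
  have extend_apply := Subtype.val_injective.extend_apply (fun c => (r c : StrongDual ℝ X)) id
  refine ⟨fun x hx => ?_, fun x hx => ?_, fun x hx h => ?_, fun x hx y hy => ?_⟩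
  · lift x to K using hx
    rw [extend_apply]
    exact ⟨(r x).2, fun s => congrArg Subtype.val (hr x s)⟩
  · lift x to K using hx
    rw [extend_apply, extend_apply, hrfix _ (hr x)]
  · lift x to K using hx
    rw [extend_apply, hrfix x fun s => Subtype.ext (h s)]
  · lift x to K using hx
    lift y to K using hy
    rw [extend_apply, extend_apply]
    exact hrne x y

/-- **Theorem (M), case (ii)**: a nonexpansive dynamical system `(S,(K,weak*))` on a weak*
compact convex subset of the dual of an `M`-embedded Banach space, whose enveloping semigroup
consists of weak* continuous maps, has a common fixed point provided `WAP(S)` has a left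
invariant mean; moreover the fixed point set is a nonexpansive retract of `K`. -/
theorem fixedPoint_and_retract_MEmbedded_of_WAP_hasLIM
    {S : Type u} [Semigroup S] [TopologicalSpace S] [T2Space S]
    (hS : IsSemitopologicalSemigroup S)
    {X : Type v} [NormedAddCommGroup X] [NormedSpace ℝ X] [CompleteSpace X]
    -- `X` is an `M`-embedded Banach space
    (hM : MEmbeddedSpace X)
    (K : Set (StrongDual ℝ X)) (π : S → StrongDual ℝ X → StrongDual ℝ X)
    -- `K` is a nonempty weak* compact convex set
    (hKne : K.Nonempty) (hKcv : Convex ℝ K) (hKcpt : @IsCompact _ (wstarTop X) K)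
    -- `(S,(K,weak*))` is a dynamical system
    (hinv : ∀ s : S, MapsTo (π s) K K)
    (hact : ∀ s t : S, ∀ x ∈ K, π (s * t) x = π s (π t x))
    (horb : ∀ x ∈ K, @Continuous S _ _ (wstarTop X) fun s => π s x)
    (htra : ∀ s : S, @ContinuousOn _ _ (wstarTop X) (wstarTop X) (π s) K)
    -- the system is nonexpansive
    (hne : ∀ s : S, ∀ x ∈ K, ∀ y ∈ K, ‖π s x - π s y‖ ≤ ‖x - y‖)
    -- every member of the enveloping semigroup `E(S,K)` is weak* continuous
    (henv : ∀ T : K → K,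
      T ∈ @closure (K → K)
          (@Pi.topologicalSpace K (fun _ => K)
            (fun _ => @instTopologicalSpaceSubtype _ (· ∈ K) (wstarTop X)))
          {T' | ∃ s : S, ∀ x : K, (T' x : StrongDual ℝ X) = π s (x : StrongDual ℝ X)} →
      @Continuous K K (@instTopologicalSpaceSubtype _ (· ∈ K) (wstarTop X))
        (@instTopologicalSpaceSubtype _ (· ∈ K) (wstarTop X)) T)
    -- the amenability hypothesis
    (hLIM : HasLIM S (WAPset S)) :
    -- `S` has a fixed point in `K` ...
    (∃ x ∈ K, ∀ s : S, π s x = x) ∧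
    -- ... and `F(S)` is a nonexpansive retract of `K`
    ∃ r : StrongDual ℝ X → StrongDual ℝ X,
      (∀ x ∈ K, r x ∈ K ∧ ∀ s : S, π s (r x) = r x) ∧
      (∀ x ∈ K, r (r x) = r x) ∧
      (∀ x ∈ K, (∀ s : S, π s x = x) → r x = x) ∧
      (∀ x ∈ K, ∀ y ∈ K, ‖r x - r y‖ ≤ ‖x - y‖) := by
  exact fixedPoint_and_retract_MEmbedded_of_WAP_hasLIM_general hM K π hKne hKcv hKcpt hinv hact horb
    hne henv hLIM
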